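/- arXiv:1506.07076 — 2 statements merged into one kernel-verified Lean document; each statement's English description precedes it below -/
import Mathlib

section
/- Let a graph have positive integer edge weights, and let the degree d(v) of a vertex v be the sum of the weights of its incident edges. Suppose the graph contains two disjoint vertex sets U and V such that every edge incident to U goes to V, where V = {v_1, ..., v_n} and U = W ∪ X with W = {w_1, ..., w_n} and |X| = c·n for some real 0 < c < 1. Suppose further that for a positive integer Δ: (Constraint 1) every edge (u,v) between U and V satisfies d(u) + d(v) ≤ Δ; and (Constraint 2) for each i = 1, ..., n, d(v_i) + d(w_i) ≥ Δ − 1. Then the sum of the degrees of vertices of X is at most Δn·c/(2+c) + n; equivalently, the average degree of the vertices of X is at most Δ/(2+c) + 1/c. -/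
/-- The weighted degree of `v`: the sum, over edges of `G` incident to `v`,
of the weight `w` of the edge. -/
def wdeg {V : Type*} [Fintype V] [DecidableEq V] (G : SimpleGraph V) [DecidableRel G.Adj]
    (w : Sym2 V → ℕ) (v : V) : ℕ :=
  ∑ u ∈ G.neighborFinset v, w s(v, u)

/-!
Write `δ` for the slack in the second constraint (`δ = 1` in `stmt6`) and put `τ = Δ / (2 + c)`.
For `δ = 0` the bound is attained when `d(x) = d(wᵢ) = τ` and `d(vᵢ) = Δ - τ`. For any nonnegative
increasing `h`, each edge `uv` at `U` has `h(d(u)) ≤ h(Δ - d(v))`, and summing these inequalities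
with the edge weights gives `∑_{u ∈ U} d(u) h(d(u)) ≤ ∑ᵢ d(vᵢ) h(Δ - d(vᵢ))`.

Choose `h(t) = max(0, cτ + 2(t - τ))`. Then `t h(t)` lies above its tangent line at `τ`, which
bounds the terms with `u ∈ X` below linearly in `d(u)`. The slope `2` makes the linear terms in
`t - τ` cancel from `(Δ - t) h(t) - t h(t)`, so each pair contributes at most `c²τ² + Δδ` to
`∑ᵢ (d(vᵢ) h(Δ - d(vᵢ)) - d(wᵢ) h(d(wᵢ)))`.
-/

section WeightedDegree

variable {V R : Type*}

/-- The degree of a vertex in a graph whose edges carry weights in an additive monoid; `wdeg` is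
the case of natural number weights. Only the values of `w` on edges of `G` matter. -/
def weightedDegree [AddCommMonoid R] (G : SimpleGraph V) [G.LocallyFinite] (w : Sym2 V → R)
    (v : V) : R :=
  ∑ u ∈ G.neighborFinset v, w s(v, u)

@[norm_cast]
lemma natCast_wdeg [Fintype V] [DecidableEq V] [AddCommMonoidWithOne R] (G : SimpleGraph V)
    [DecidableRel G.Adj] (w : Sym2 V → ℕ) (v : V) :
    (wdeg G w v : R) = weightedDegree G (fun e => (w e : R)) v :=
  Nat.cast_sum _ _

lemma weightedDegree_nonneg [AddCommMonoid R] [PartialOrder R] [IsOrderedAddMonoid R]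
    {G : SimpleGraph V} [G.LocallyFinite] {w : Sym2 V → R} (hw : ∀ e ∈ G.edgeSet, 0 ≤ w e)
    (v : V) : 0 ≤ weightedDegree G w v :=
  Finset.sum_nonneg fun _ hu => hw _ ((G.mem_neighborFinset _ _).mp hu)

lemma sum_weightedDegree_mul_le [CommSemiring R] [PartialOrder R] [IsOrderedRing R]
    {G : SimpleGraph V} [G.LocallyFinite] {w : Sym2 V → R} (hw : ∀ e ∈ G.edgeSet, 0 ≤ w e)
    {U T : Finset V} {f g : V → R} (hUT : ∀ u ∈ U, ∀ v, G.Adj u v → v ∈ T)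
    (hg : ∀ v ∈ T, 0 ≤ g v) (hfg : ∀ u ∈ U, ∀ v, G.Adj u v → f u ≤ g v) :
    ∑ u ∈ U, weightedDegree G w u * f u ≤ ∑ v ∈ T, weightedDegree G w v * g v := by
  classical
  calc ∑ u ∈ U, weightedDegree G w u * f u
      = ∑ u ∈ U, ∑ v ∈ G.neighborFinset u, w s(u, v) * f u := by
        simp only [weightedDegree, Finset.sum_mul]
    _ ≤ ∑ u ∈ U, ∑ v ∈ G.neighborFinset u, w s(v, u) * g v := by
        refine Finset.sum_le_sum fun u hu => Finset.sum_le_sum fun v hv => ?_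
        rw [G.mem_neighborFinset] at hv
        rw [Sym2.eq_swap]
        exact mul_le_mul_of_nonneg_left (hfg u hu v hv) (hw _ hv.symm)
    _ = ∑ v ∈ T, ∑ u ∈ G.neighborFinset v with u ∈ U, w s(v, u) * g v := by
        refine Finset.sum_comm' fun u v => ?_
        rw [Finset.mem_filter, G.mem_neighborFinset, G.mem_neighborFinset, G.adj_comm v u]
        exact ⟨fun h => ⟨h.symm, hUT u h.1 v h.2⟩, fun h => h.1.symm⟩
    _ ≤ ∑ v ∈ T, ∑ u ∈ G.neighborFinset v, w s(v, u) * g v :=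
        Finset.sum_le_sum fun v hv => Finset.sum_le_sum_of_subset_of_nonneg
          (Finset.filter_subset _ _) fun u hu _ =>
            mul_nonneg (hw _ ((G.mem_neighborFinset _ _).mp hu)) (hg v hv)
    _ = ∑ v ∈ T, weightedDegree G w v * g v := by
        simp only [weightedDegree, Finset.sum_mul]

lemma sum_weightedDegree_mul_comp_le [CommRing R] [PartialOrder R] [IsOrderedRing R]
    {G : SimpleGraph V} [G.LocallyFinite] {w : Sym2 V → R} (hw : ∀ e ∈ G.edgeSet, 0 ≤ w e)
    {U T : Finset V} {h : R → R} {Δ : R} (hUT : ∀ u ∈ U, ∀ v, G.Adj u v → v ∈ T)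
    (h_nonneg : ∀ t, 0 ≤ h t) (h_mono : Monotone h)
    (hΔ : ∀ u ∈ U, ∀ v, G.Adj u v → weightedDegree G w u + weightedDegree G w v ≤ Δ) :
    ∑ u ∈ U, weightedDegree G w u * h (weightedDegree G w u) ≤
      ∑ v ∈ T, weightedDegree G w v * h (Δ - weightedDegree G w v) :=
  sum_weightedDegree_mul_le hw hUT (fun _ _ => h_nonneg _) fun u hu v huv =>
    h_mono (le_sub_right_of_add_le (hΔ u hu v huv))

end WeightedDegree

section Ramp

variable {R : Type*} [CommRing R] [LinearOrder R] {b c t x δ τ : R}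

/-- The function `h` by which degrees are weighted in the double count: the line of slope `2`
with value `c * τ` at `τ`, cut off below at `0`. -/
def ramp (c τ t : R) : R := max 0 (c * τ + 2 * (t - τ))

lemma ramp_nonneg (c τ t : R) : 0 ≤ ramp c τ t := le_max_left _ _

lemma line_le_ramp (c τ t : R) : c * τ + 2 * (t - τ) ≤ ramp c τ t := le_max_right _ _

variable [IsStrictOrderedRing R]

lemma ramp_mono (c τ : R) : Monotone (ramp c τ) := fun s t hst =>
  max_le_max le_rfl (by linarith)

lemma tangent_le_mul_ramp (c τ : R) (hx : 0 ≤ x) :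
    (2 + c) * τ * x - 2 * τ ^ 2 ≤ x * ramp c τ x :=
  calc (2 + c) * τ * x - 2 * τ ^ 2
      ≤ x * (c * τ + 2 * (x - τ)) := by linarith [sq_nonneg (x - τ)]
    _ ≤ x * ramp c τ x := mul_le_mul_of_nonneg_left (line_le_ramp c τ x) hx

lemma sub_mul_line_le_mul_ramp_add (hc : 0 ≤ c) (hτ : 0 ≤ τ) (hb : 0 ≤ b) (htb : t - δ ≤ b) :
    ((2 + c) * τ - t) * (c * τ + 2 * (t - τ)) ≤
      b * ramp c τ b + (c ^ 2 * τ ^ 2 + (2 + c) * τ * δ) := by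
  rcases le_total t δ with htδ | hδt
  · have hslack : 0 ≤ (2 + c) * τ * (δ - t) :=
      mul_nonneg (by positivity) (sub_nonneg.mpr htδ)
    have hbh : 0 ≤ b * ramp c τ b := mul_nonneg hb (ramp_nonneg c τ b)
    -- The right side exceeds the left by `2 (t - τ)² + 2 τ²` plus the two terms above.
    linarith [sq_nonneg (t - τ), sq_nonneg τ]
  · have hline : (t - δ) * (c * τ + 2 * (t - δ - τ)) ≤ b * ramp c τ b :=
      (mul_le_mul_of_nonneg_left (line_le_ramp c τ (t - δ)) (sub_nonneg.mpr hδt)).trans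
        (mul_le_mul htb (ramp_mono c τ htb) (ramp_nonneg c τ _) hb)
    -- Up to `hline`, the right side exceeds the left by `2 (t - τ)² + 2 (t - τ - δ)²`.
    linarith [sq_nonneg (t - τ), sq_nonneg (t - τ - δ)]

lemma sub_mul_ramp_le_mul_ramp_add (hc : 0 ≤ c) (hτ : 0 ≤ τ) (hδ : 0 ≤ δ) (hb : 0 ≤ b)
    (htb : t - δ ≤ b) :
    ((2 + c) * τ - t) * ramp c τ t ≤
      b * ramp c τ b + (c ^ 2 * τ ^ 2 + (2 + c) * τ * δ) := by
  rcases max_choice 0 (c * τ + 2 * (t - τ)) with hzero | hline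
  · have hbh : 0 ≤ b * ramp c τ b := mul_nonneg hb (ramp_nonneg c τ b)
    rw [ramp, hzero, mul_zero]
    positivity
  · rw [ramp, hline]
    exact sub_mul_line_le_mul_ramp_add hc hτ hb htb

lemma mul_sum_sub_le_sum_mul_ramp {α : Type*} {s : Finset α} {f : α → R} (c τ : R)
    (hf : ∀ a ∈ s, 0 ≤ f a) :
    (2 + c) * τ * ∑ a ∈ s, f a - s.card * (2 * τ ^ 2) ≤ ∑ a ∈ s, f a * ramp c τ (f a) := by
  rw [Finset.mul_sum, ← nsmul_eq_mul, ← Finset.sum_const, ← Finset.sum_sub_distrib]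
  exact Finset.sum_le_sum fun a ha => tangent_le_mul_ramp c τ (hf a ha)

lemma sum_mul_ramp_sub_le_sum_mul_ramp_add {α : Type*} {s : Finset α} {f g : α → R}
    (hc : 0 ≤ c) (hτ : 0 ≤ τ) (hδ : 0 ≤ δ) (hg : ∀ a ∈ s, 0 ≤ g a)
    (hfg : ∀ a ∈ s, (2 + c) * τ - δ ≤ f a + g a) :
    ∑ a ∈ s, f a * ramp c τ ((2 + c) * τ - f a) ≤
      ∑ a ∈ s, g a * ramp c τ (g a) + s.card * (c ^ 2 * τ ^ 2 + (2 + c) * τ * δ) := by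
  rw [← nsmul_eq_mul, ← Finset.sum_const, ← Finset.sum_add_distrib]
  refine Finset.sum_le_sum fun a ha => ?_
  have hsub : (2 + c) * τ - f a - δ ≤ g a := by linarith [hfg a ha]
  simpa only [sub_sub_cancel] using sub_mul_ramp_le_mul_ramp_add hc hτ hδ (hg a ha) hsub

end Ramp

theorem stmt6_general {V ι K : Type*} [DecidableEq V] [Fintype ι] [Field K] [LinearOrder K]
    [IsStrictOrderedRing K] (G : SimpleGraph V) [G.LocallyFinite]
    (w : Sym2 V → K) (hw : ∀ e ∈ G.edgeSet, 0 ≤ w e)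
    (vf wf : ι → V) (hwf : Function.Injective wf)
    (X : Finset V) (c : K) (hc : 0 ≤ c) (hX : (X.card : K) = c * Fintype.card ι)
    (hWX : Disjoint (Finset.image wf Finset.univ) X)
    (hedge : ∀ u ∈ Finset.image wf Finset.univ ∪ X, ∀ v, G.Adj u v →
      v ∈ Finset.image vf Finset.univ)
    (Δ δ : K) (hΔ : 0 < Δ) (hδ : 0 ≤ δ)
    (hC1 : ∀ u ∈ Finset.image wf Finset.univ ∪ X, ∀ v, G.Adj u v →
      weightedDegree G w u + weightedDegree G w v ≤ Δ)
    (hC2 : ∀ i, Δ - δ ≤ weightedDegree G w (vf i) + weightedDegree G w (wf i)) :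
    ∑ x ∈ X, weightedDegree G w x ≤
      Δ * Fintype.card ι * c / (2 + c) + δ * Fintype.card ι := by
  obtain ⟨τ, rfl⟩ : ∃ τ, Δ = (2 + c) * τ := ⟨Δ / (2 + c), by field_simp⟩
  have hτ : 0 ≤ τ := (pos_of_mul_pos_right hΔ (by positivity)).le
  set d := weightedDegree G w
  have hd : ∀ v, 0 ≤ d v := weightedDegree_nonneg hw
  have hcount : ∑ i, d (wf i) * ramp c τ (d (wf i)) + ∑ x ∈ X, d x * ramp c τ (d x) ≤
      ∑ i, d (vf i) * ramp c τ ((2 + c) * τ - d (vf i)) := by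
    rw [← Finset.sum_image hwf.injOn (f := fun u => d u * ramp c τ (d u)), ← Finset.sum_union hWX]
    exact (sum_weightedDegree_mul_comp_le hw hedge (ramp_nonneg c τ) (ramp_mono c τ) hC1).trans
      (Finset.sum_image_le_of_nonneg fun v _ => mul_nonneg (hd v) (ramp_nonneg c τ _))
  have htangent := mul_sum_sub_le_sum_mul_ramp c τ fun x (_ : x ∈ X) => hd x
  have hpairs := sum_mul_ramp_sub_le_sum_mul_ramp_add (s := Finset.univ) hc hτ hδ
    (fun i _ => hd (wf i)) fun i _ => hC2 i
  rw [hX] at htangent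
  rw [Finset.card_univ] at hpairs
  have hbound : (2 + c) * τ * Fintype.card ι * c / (2 + c) = τ * Fintype.card ι * c := by
    field_simp
  rw [hbound]
  refine le_of_mul_le_mul_left ?_ hΔ
  linarith

/-- Let a graph `G` have positive integer edge weights `w`, and let
`U = W ∪ X` and `V' = {v_1, …, v_n}` be disjoint vertex sets with `W = {w_1, …, w_n}`,
`|X| = c·n` for some real `0 < c < 1`, such that every edge incident to `U` goes to `V'`.
If every edge `(u,v)` between `U` and `V'` satisfies `d(u) + d(v) ≤ Δ` and each pair
satisfies `d(v_i) + d(w_i) ≥ Δ − 1`, then the total degree of `X` is at most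
`Δ·n·c/(2+c) + n`. -/
theorem stmt6 {V : Type*} [Fintype V] [DecidableEq V] (G : SimpleGraph V) [DecidableRel G.Adj]
    (w : Sym2 V → ℕ) (hw : ∀ e ∈ G.edgeSet, 0 < w e)
    (n : ℕ) (vf wf : Fin n → V)
    (hvf : Function.Injective vf) (hwf : Function.Injective wf)
    (X : Finset V) (c : ℝ) (hc0 : 0 < c) (hc1 : c < 1)
    (hX : (X.card : ℝ) = c * n)
    (hWX : Disjoint (Finset.image wf Finset.univ) X)
    (hUV : Disjoint (Finset.image wf Finset.univ ∪ X) (Finset.image vf Finset.univ))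
    (hedge : ∀ u v : V, G.Adj u v → u ∈ Finset.image wf Finset.univ ∪ X →
      v ∈ Finset.image vf Finset.univ)
    (Δ : ℕ) (hΔ : 0 < Δ)
    (hC1 : ∀ u v : V, G.Adj u v → u ∈ Finset.image wf Finset.univ ∪ X →
      v ∈ Finset.image vf Finset.univ → wdeg G w u + wdeg G w v ≤ Δ)
    (hC2 : ∀ i : Fin n, Δ - 1 ≤ wdeg G w (vf i) + wdeg G w (wf i)) :
    (∑ x ∈ X, (wdeg G w x : ℝ)) ≤ Δ * n * c / (2 + c) + n := by
  simpa [natCast_wdeg] using stmt6_general G (fun e => (w e : ℝ)) (fun _ _ => Nat.cast_nonneg _)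
    vf wf hwf X c hc0.le (by simpa using hX) hWX (fun u hu v huv => hedge u v huv hu) Δ 1
    (mod_cast hΔ) zero_le_one (fun u hu v huv => mod_cast hC1 u v huv hu (hedge u v huv hu))
    (fun i => sub_le_iff_le_add.mpr (mod_cast tsub_le_iff_right.mp (hC2 i)))
end

section
/- Let G be a bipartite graph, let 0 < λ < 1 with βλ/6 a positive integer, let H be an unweighted edge-degree-constrained subgraph EDCS(G, β, β(1−λ)), and let G' be obtained from G by inserting a single new edge e. Then there exists an unweighted EDCS(G', β, β(1−λ)) H' such that the symmetric difference of H and H' contains at most 24/λ + 2 edges. -/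
/-- The degree of `v` in the simple graph `H`. -/
noncomputable def sdeg {V : Type*} (H : SimpleGraph V) (v : V) : ℕ :=
  (H.neighborSet v).ncard

/-!
Insert the new edge `ab` into `H` only if the lower bound (P2) fails for it, and keep the old
degrees as labels `D` of the vertices. The labels satisfy both constraints, but the true degree
exceeds the label by one at `a` and at `b`. The excess at `a` is moved along an alternating path
while the labels stay fixed. If the upper bound (P1) now fails at an edge `vx` of `H`, then
`D v + D x = β`, and deleting `vx` leaves a deficit of one at `x`; if (P2) now fails at an edge `xy`
outside `H`, then `D x + D y = β⁻`, and adding `xy` leaves an excess of one at `y`. Such a pair of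
moves lowers the label of the vertex in excess by `β - β⁻`, and labels are bounded below, so the
path is short. When neither constraint fails, the labels are replaced by the current degrees, except
that `b` keeps its excess, which is then treated in the same way.

A vertex may occur on the path several times: the potential `D v` alone bounds the length.
-/

open SimpleGraph

section Degree

variable {V : Type*}

theorem finite_neighborSet_edge (a b v : V) : ((edge a b).neighborSet v).Finite :=
  (Set.toFinite {a, b}).subset fun u hu => by
    rw [mem_neighborSet, edge_adj] at hu
    grind

theorem sdeg_sup {H K : SimpleGraph V} (hHK : Disjoint H K) {v : V}
    (hH : (H.neighborSet v).Finite) (hK : (K.neighborSet v).Finite) :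
    sdeg (H ⊔ K) v = sdeg H v + sdeg K v :=
  Set.ncard_union_eq (Set.disjoint_left.2 fun _ h h' => disjoint_left.1 hHK _ _ h h') hH hK

theorem sdeg_edge [DecidableEq V] {a b : V} (hab : a ≠ b) (v : V) :
    sdeg (edge a b) v = (Pi.single a 1 + Pi.single b 1 : V → ℕ) v := by
  have hset : (edge a b).neighborSet v = if v = a then {b} else if v = b then {a} else ∅ := by
    ext u
    rw [mem_neighborSet, edge_adj]
    grind
  simp only [sdeg, hset, Pi.add_apply, Pi.single_apply]
  grind [Set.ncard_singleton, Set.ncard_empty]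

/-- The degrees in `H` as an integer labelling of the vertices, so that a deficit can be expressed
by subtraction. -/
noncomputable def degLabel (H : SimpleGraph V) : V → ℤ :=
  fun v => sdeg H v

theorem degLabel_nonneg (H : SimpleGraph V) (v : V) : 0 ≤ degLabel H v :=
  Int.natCast_nonneg _

theorem degLabel_sup_edge [DecidableEq V] {H : SimpleGraph V}
    (hfin : ∀ v, (H.neighborSet v).Finite) {a b : V} (hab : a ≠ b) (hH : ¬ H.Adj a b) :
    degLabel (H ⊔ edge a b) = degLabel H + Pi.single a 1 + Pi.single b 1 := by
  funext v
  have h := sdeg_sup ((disjoint_edge H).2 hH) (hfin v) (finite_neighborSet_edge a b v)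
  simp only [degLabel, h, sdeg_edge hab, Pi.add_apply, Pi.single_apply]
  push_cast
  ring

theorem degLabel_sdiff_edge [DecidableEq V] {H : SimpleGraph V}
    (hfin : ∀ v, (H.neighborSet v).Finite) {a b : V} (hH : H.Adj a b) :
    degLabel (H \ edge a b) = degLabel H - Pi.single a 1 - Pi.single b 1 := by
  have h := degLabel_sup_edge (H := H \ edge a b) (fun v => (hfin v).subset fun _ hu => hu.1)
    hH.ne (by simp [edge_adj, hH.ne])
  rw [sdiff_sup_cancel ((edge_le_iff H).2 (Or.inr hH))] at h
  rw [h]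
  abel

end Degree

section EdgeDist

variable {V : Type*}

/-- The number of edge insertions and deletions that turn `H` into `H'`, valued in `ℕ∞` so that
infinitely many changes are not counted as `0`. -/
noncomputable def edgeDist (H H' : SimpleGraph V) : ℕ∞ :=
  (symmDiff H.edgeSet H'.edgeSet).encard

@[simp]
theorem edgeDist_self (H : SimpleGraph V) : edgeDist H H = 0 := by
  simp [edgeDist]

theorem edgeDist_triangle (H₁ H₂ H₃ : SimpleGraph V) :
    edgeDist H₁ H₃ ≤ edgeDist H₁ H₂ + edgeDist H₂ H₃ :=
  (Set.encard_le_encard (symmDiff_triangle _ _ _)).trans (Set.encard_union_le _ _)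

theorem edgeDist_sup_edge_le_one (H : SimpleGraph V) (a b : V) :
    edgeDist H (H ⊔ edge a b) ≤ 1 := by
  rw [edgeDist, ← Set.encard_singleton s(a, b), edgeSet_sup]
  refine Set.encard_le_encard fun e he => ?_
  grind [edgeSet_edge_subset (v := a) (w := b)]

theorem edgeDist_sdiff_edge_le_one (H : SimpleGraph V) (a b : V) :
    edgeDist H (H \ edge a b) ≤ 1 := by
  rw [edgeDist, ← Set.encard_singleton s(a, b), edgeSet_sdiff]
  refine Set.encard_le_encard fun e he => ?_
  grind [edgeSet_edge_subset (v := a) (w := b)]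

end EdgeDist

theorem add_eq_add_of_edge_adj {V M : Type*} [AddCommMagma M] (D : V → M) {a b u v : V}
    (h : (edge a b).Adj u v) : D u + D v = D a + D b := by
  rcases (edge_adj ..).1 h with ⟨⟨rfl, rfl⟩ | ⟨rfl, rfl⟩, -⟩
  exacts [rfl, add_comm _ _]

/-- The defining properties of an edge-degree-constrained subgraph `H` of `G`, with an arbitrary
vertex labelling `D` in place of the degrees in `H`. Local finiteness is included because `sdeg` is
`0` at a vertex of infinite degree. -/
structure IsLabelledEDCS {V : Type*} (G H : SimpleGraph V) (D : V → ℤ) (β β' : ℤ) : Prop where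
  le : H ≤ G
  finite_neighborSet : ∀ v, (H.neighborSet v).Finite
  add_le : ∀ u v, H.Adj u v → D u + D v ≤ β
  le_add : ∀ u v, G.Adj u v → ¬ H.Adj u v → β' ≤ D u + D v

namespace IsLabelledEDCS

variable {V : Type*} {G H : SimpleGraph V} {D : V → ℤ} {β β' : ℤ}

theorem sup_edge_left (h : IsLabelledEDCS G H D β β') {a b : V} (hab : β' ≤ D a + D b) :
    IsLabelledEDCS (G ⊔ edge a b) H D β β' where
  le := h.le.trans le_sup_left
  finite_neighborSet := h.finite_neighborSet
  add_le := h.add_le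
  le_add u v huv hn := huv.elim (h.le_add u v · hn) fun he =>
    hab.trans_eq (add_eq_add_of_edge_adj D he).symm

theorem sup_edge_sup_edge (h : IsLabelledEDCS G H D β β') {a b : V} (hab : D a + D b ≤ β) :
    IsLabelledEDCS (G ⊔ edge a b) (H ⊔ edge a b) D β β' where
  le := sup_le_sup_right h.le _
  finite_neighborSet v :=
    (h.finite_neighborSet v).union (finite_neighborSet_edge a b v)
  add_le u v huv := huv.elim (h.add_le u v) fun he => (add_eq_add_of_edge_adj D he).trans_le hab
  le_add u v huv hn := h.le_add u v (huv.resolve_right fun he => hn (.inr he)) (hn <| .inl ·)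

theorem sup_edge_right (h : IsLabelledEDCS G H D β β') {a b : V} (hG : G.Adj a b)
    (hab : D a + D b ≤ β) : IsLabelledEDCS G (H ⊔ edge a b) D β β' := by
  simpa only [sup_edge_of_adj G hG] using h.sup_edge_sup_edge hab

theorem sdiff_edge_right (h : IsLabelledEDCS G H D β β') {a b : V} (hab : β' ≤ D a + D b) :
    IsLabelledEDCS G (H \ edge a b) D β β' where
  le := sdiff_le.trans h.le
  finite_neighborSet v := (h.finite_neighborSet v).subset fun _ hu => hu.1
  add_le u v huv := h.add_le u v huv.1
  le_add u v huv hn := by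
    by_cases hH : H.Adj u v
    · have he : (edge a b).Adj u v := of_not_not fun he => hn ⟨hH, he⟩
      exact hab.trans_eq (add_eq_add_of_edge_adj D he).symm
    · exact h.le_add u v huv hH

variable [DecidableEq V]

theorem add_single (h : IsLabelledEDCS G H D β β') {v : V}
    (hv : ∀ x, H.Adj v x → D v + D x < β) :
    IsLabelledEDCS G H (D + Pi.single v 1) β β' where
  le := h.le
  finite_neighborSet := h.finite_neighborSet
  add_le p q hpq := by
    have := h.add_le p q hpq
    have := hpq.ne
    have := hv p
    have := hv q
    simp only [Pi.add_apply, Pi.single_apply]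
    grind [SimpleGraph.adj_comm]
  le_add p q hpq hn := by
    have := h.le_add p q hpq hn
    simp only [Pi.add_apply, Pi.single_apply]
    grind

theorem sub_single (h : IsLabelledEDCS G H D β β') {x : V}
    (hx : ∀ y, G.Adj x y → ¬ H.Adj x y → β' < D x + D y) :
    IsLabelledEDCS G H (D - Pi.single x 1) β β' where
  le := h.le
  finite_neighborSet := h.finite_neighborSet
  add_le p q hpq := by
    have := h.add_le p q hpq
    simp only [Pi.sub_apply, Pi.single_apply]
    grind
  le_add p q hpq hn := by
    have := h.le_add p q hpq hn
    have := hpq.ne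
    have := hx p
    have := hx q
    simp only [Pi.sub_apply, Pi.single_apply]
    grind [SimpleGraph.adj_comm]

/- The offset `w` marks vertices whose excess is left alone for the moment. -/
theorem exists_repair_or_move {w : V → ℤ} (h : IsLabelledEDCS G H D β β') (hβ : β' ≤ β) {v : V}
    (hD : degLabel H = D + w + Pi.single v 1) :
    (∃ H', IsLabelledEDCS G H' (degLabel H' - w) β β' ∧ degLabel H' ≤ D + w + 1 ∧
      edgeDist H H' ≤ 1) ∨
    ∃ H' y, IsLabelledEDCS G H' D β β' ∧ degLabel H' = D + w + Pi.single y 1 ∧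
      D y = D v - (β - β') ∧ edgeDist H H' ≤ 2 := by
  by_cases hv : ∀ x, H.Adj v x → D v + D x < β
  · have hlabel : degLabel H - w = D + Pi.single v 1 := by rw [hD]; abel
    refine .inl ⟨H, hlabel ▸ h.add_single hv, ?_, by simp⟩
    intro u
    simp only [hD, Pi.add_apply, Pi.single_apply, Pi.one_apply]
    grind
  push Not at hv
  obtain ⟨x, hvx, hβx⟩ := hv
  have h₁ := h.sdiff_edge_right (hβ.trans hβx)
  have hD₁ : degLabel (H \ edge v x) = D + w - Pi.single x 1 := by
    rw [degLabel_sdiff_edge h.finite_neighborSet hvx, hD]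
    abel
  have hdist₁ := edgeDist_sdiff_edge_le_one H v x
  by_cases hx : ∀ y, G.Adj x y → ¬ (H \ edge v x).Adj x y → β' < D x + D y
  · have hlabel : degLabel (H \ edge v x) - w = D - Pi.single x 1 := by rw [hD₁]; abel
    refine .inl ⟨H \ edge v x, hlabel ▸ h₁.sub_single hx, ?_, hdist₁⟩
    intro u
    simp only [hD₁, Pi.add_apply, Pi.sub_apply, Pi.single_apply, Pi.one_apply]
    grind
  push Not at hx
  obtain ⟨y, hxy, hn, hβy⟩ := hx
  refine .inr ⟨H \ edge v x ⊔ edge x y, y, h₁.sup_edge_right hxy (hβy.trans hβ), ?_, ?_, ?_⟩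
  · rw [degLabel_sup_edge h₁.finite_neighborSet hxy.ne hn, hD₁]
    abel
  · have := h.add_le v x hvx
    have := h₁.le_add x y hxy hn
    omega
  · exact (edgeDist_triangle _ _ _).trans
      (add_le_add hdist₁ (edgeDist_sup_edge_le_one _ x y))

theorem exists_repair {w : V → ℤ} {m : ℤ} (hβ : β' ≤ β) (hm : ∀ u, m ≤ D u) (n : ℕ) {v : V}
    (h : IsLabelledEDCS G H D β β') (hD : degLabel H = D + w + Pi.single v 1)
    (hv : D v < m + (β - β') * (n + 1)) :
    ∃ H', IsLabelledEDCS G H' (degLabel H' - w) β β' ∧ degLabel H' ≤ D + w + 1 ∧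
      edgeDist H H' ≤ 2 * n + 1 := by
  induction n generalizing H v with
  | zero =>
    obtain ⟨H', h', hD', hdist⟩ | ⟨H', y, -, -, hy, -⟩ := h.exists_repair_or_move hβ hD
    · exact ⟨H', h', hD', by simpa using hdist⟩
    · have := hm y
      simp only [Nat.cast_zero, zero_add, mul_one] at hv
      omega
  | succ n ih =>
    obtain ⟨H', h', hD', hdist⟩ | ⟨H₁, y, h₁, hD₁, hy, hdist₁⟩ := h.exists_repair_or_move hβ hD
    · exact ⟨H', h', hD', hdist.trans le_add_self⟩
    · obtain ⟨H', h', hD', hdist⟩ := ih h₁ hD₁ (by push_cast at hv; linarith)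
      refine ⟨H', h', hD', ?_⟩
      calc edgeDist H H' ≤ edgeDist H H₁ + edgeDist H₁ H' := edgeDist_triangle _ _ _
        _ ≤ 2 + (2 * n + 1) := add_le_add hdist₁ hdist
        _ = 2 * (n + 1 : ℕ) + 1 := by push_cast; ring

end IsLabelledEDCS

/-- The edge-degree-constrained subgraphs EDCS(`G`, `β`, `β'`) with integer bounds, where `β'`
stands for `β⁻`. -/
abbrev IsEDCS {V : Type*} (G H : SimpleGraph V) (β β' : ℤ) : Prop :=
  IsLabelledEDCS G H (degLabel H) β β'

theorem isEDCS_ceil_iff {V : Type*} {G H : SimpleGraph V} {β : ℕ} {r : ℝ} :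
    IsEDCS G H β ⌈r⌉ ↔ H ≤ G ∧ (∀ v, (H.neighborSet v).Finite) ∧
      (∀ u v, H.Adj u v → sdeg H u + sdeg H v ≤ β) ∧
      ∀ u v, G.Adj u v → ¬ H.Adj u v → r ≤ (sdeg H u + sdeg H v : ℝ) := by
  have hceil (u v : V) : ⌈r⌉ ≤ degLabel H u + degLabel H v ↔ r ≤ (sdeg H u + sdeg H v : ℝ) := by
    simp [Int.ceil_le, degLabel]
  have hcast (u v : V) : degLabel H u + degLabel H v ≤ β ↔ sdeg H u + sdeg H v ≤ β := by
    simp only [degLabel]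
    norm_cast
  constructor
  · rintro ⟨hle, hfin, hP1, hP2⟩
    exact ⟨hle, hfin, fun u v h => (hcast u v).1 (hP1 u v h),
      fun u v h hn => (hceil u v).1 (hP2 u v h hn)⟩
  · rintro ⟨hle, hfin, hP1, hP2⟩
    exact ⟨hle, hfin, fun u v h => (hcast u v).2 (hP1 u v h),
      fun u v h hn => (hceil u v).2 (hP2 u v h hn)⟩

theorem IsEDCS.exists_sup_edge {V : Type*} {G H : SimpleGraph V} {β β' : ℤ}
    (h : IsEDCS G H β β') (hβ : β' < β) {a b : V} (hab : a ≠ b) (hnadj : ¬ G.Adj a b) {n : ℕ}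
    (hn : β < (β - β') * (n + 1)) :
    ∃ H', IsEDCS (G ⊔ edge a b) H' β β' ∧ edgeDist H H' ≤ 4 * n + 3 := by
  classical
  by_cases hlarge : β' ≤ degLabel H a + degLabel H b
  · exact ⟨H, h.sup_edge_left hlarge, by simp⟩
  have ha := degLabel_nonneg H a
  have hb := degLabel_nonneg H b
  have h₀ : IsLabelledEDCS (G ⊔ edge a b) (H ⊔ edge a b) (degLabel H) β β' :=
    h.sup_edge_sup_edge (by omega)
  have hD₀ : degLabel (H ⊔ edge a b) = degLabel H + Pi.single b 1 + Pi.single a 1 := by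
    rw [degLabel_sup_edge h.finite_neighborSet hab fun hH => hnadj (h.le hH)]
    abel
  obtain ⟨H₁, h₁, hD₁, hdist₁⟩ :=
    h₀.exists_repair hβ.le (degLabel_nonneg H) n hD₀ (by omega)
  have hlow (u : V) : -1 ≤ (degLabel H₁ - Pi.single b 1 : V → ℤ) u := by
    have := degLabel_nonneg H₁ u
    simp only [Pi.sub_apply, Pi.single_apply]
    grind
  have hb₁ : (degLabel H₁ - Pi.single b 1 : V → ℤ) b ≤ degLabel H b + 1 := by
    have := hD₁ b
    simp only [Pi.add_apply, Pi.sub_apply, Pi.single_eq_same, Pi.one_apply] at this ⊢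
    omega
  obtain ⟨H₂, h₂, -, hdist₂⟩ :=
    h₁.exists_repair (w := 0) (v := b) hβ.le hlow n (by simp) (by omega)
  refine ⟨H₂, by simpa only [sub_zero] using h₂, ?_⟩
  calc edgeDist H H₂
      ≤ edgeDist H (H ⊔ edge a b) + (edgeDist (H ⊔ edge a b) H₁ + edgeDist H₁ H₂) :=
        (edgeDist_triangle _ _ _).trans (add_le_add_right (edgeDist_triangle _ _ _) _)
    _ ≤ 1 + ((2 * n + 1) + (2 * n + 1)) :=
        add_le_add (edgeDist_sup_edge_le_one H a b) (add_le_add hdist₁ hdist₂)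
    _ = 4 * n + 3 := by ring

theorem natCast_sub_ceil_mul_one_sub (β : ℕ) (lam : ℝ) :
    (β : ℤ) - ⌈β * (1 - lam)⌉ = ⌊β * lam⌋ := by
  rw [mul_one_sub, sub_eq_add_neg (β : ℝ), Int.ceil_natCast_add, Int.ceil_neg]
  ring

theorem lt_two_mul_floor {x : ℝ} (hx : 1 ≤ x) : x < 2 * ⌊x⌋ := by
  have hfloor : (1 : ℝ) ≤ ⌊x⌋ := by exact_mod_cast Int.le_floor.2 (by exact_mod_cast hx)
  linarith [Int.lt_floor_add_one x]

theorem lt_floor_mul_floor_two_div_add_one {β : ℕ} {lam : ℝ} (hβ : 1 ≤ β * lam) :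
    (β : ℤ) < ⌊β * lam⌋ * (⌊2 / lam⌋₊ + 1) := by
  have hlam : 0 < lam := pos_of_mul_pos_right (one_pos.trans_le hβ) β.cast_nonneg
  have hreal : (β : ℝ) < ⌊β * lam⌋ * (⌊2 / lam⌋₊ + 1) := by
    calc (β : ℝ) = β * lam / 2 * (2 / lam) := by field_simp
      _ < ⌊β * lam⌋ * (⌊2 / lam⌋₊ + 1) :=
        mul_lt_mul'' (by linarith [lt_two_mul_floor hβ]) (Nat.lt_floor_add_one _)
          (by positivity) (by positivity)
  exact_mod_cast hreal

theorem stmt15_general {V : Type*} (G H : SimpleGraph V)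
    (hfin : ∀ v : V, (H.neighborSet v).Finite)
    (hHG : H ≤ G) (β : ℕ) (lam : ℝ) (hβ : 1 ≤ β * lam)
    (hP1 : ∀ u v : V, H.Adj u v → sdeg H u + sdeg H v ≤ β)
    (hP2 : ∀ u v : V, G.Adj u v → ¬ H.Adj u v →
      (β : ℝ) * (1 - lam) ≤ (sdeg H u + sdeg H v : ℝ))
    (a b : V) (hab : a ≠ b) (hnadj : ¬ G.Adj a b) :
    ∃ H' : SimpleGraph V, H' ≤ G ⊔ edge a b ∧ (∀ v : V, (H'.neighborSet v).Finite) ∧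
      (∀ u v : V, H'.Adj u v → sdeg H' u + sdeg H' v ≤ β) ∧
      (∀ u v : V, (G ⊔ edge a b).Adj u v → ¬ H'.Adj u v →
        (β : ℝ) * (1 - lam) ≤ (sdeg H' u + sdeg H' v : ℝ)) ∧
      (symmDiff H.edgeSet H'.edgeSet).Finite ∧
      ((symmDiff H.edgeSet H'.edgeSet).ncard : ℝ) ≤ 8 / lam + 3 := by
  have hlam : 0 < lam := pos_of_mul_pos_right (one_pos.trans_le hβ) β.cast_nonneg
  have hgap := natCast_sub_ceil_mul_one_sub β lam
  have hfloor : 1 ≤ ⌊β * lam⌋ := Int.le_floor.2 (by exact_mod_cast hβ)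
  obtain ⟨H', h', hdist⟩ := (isEDCS_ceil_iff.2 ⟨hHG, hfin, hP1, hP2⟩).exists_sup_edge
    (by omega) hab hnadj (hgap ▸ lt_floor_mul_floor_two_div_add_one hβ)
  obtain ⟨hle, hfin', hP1', hP2'⟩ := isEDCS_ceil_iff.1 h'
  obtain ⟨hsymm, hcard⟩ := Set.encard_le_coe_iff_finite_ncard_le.1
    (show (symmDiff H.edgeSet H'.edgeSet).encard ≤ (4 * ⌊2 / lam⌋₊ + 3 : ℕ) from mod_cast hdist)
  refine ⟨H', hle, hfin', hP1', hP2', hsymm, ?_⟩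
  calc ((symmDiff H.edgeSet H'.edgeSet).ncard : ℝ)
      ≤ 4 * ⌊2 / lam⌋₊ + 3 := by exact_mod_cast hcard
    _ ≤ 4 * (2 / lam) + 3 := by gcongr; exact Nat.floor_le (by positivity)
    _ = 8 / lam + 3 := by ring

/-- Let `H` be an unweighted EDCS(G, β, β(1−λ)) of a bipartite graph
`G`, with `0 < λ < 1` and `βλ/6` a positive integer, and let `G'` be obtained from `G` by
inserting a new edge `{a, b}`.  Then there is an unweighted EDCS(G', β, β(1−λ)) `H'` whose
symmetric difference with `H` has at most `24/λ + 2` edges. -/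
theorem stmt15 {V : Type*} [Fintype V] (G H : SimpleGraph V)
    (hHG : H ≤ G) (β : ℕ) (lam : ℝ) (hlam0 : 0 < lam) (hlam1 : lam < 1)
    (ℓ : ℕ) (hℓpos : 0 < ℓ) (hℓ : (ℓ : ℝ) = β * lam / 6)
    (hP1 : ∀ u v : V, H.Adj u v → sdeg H u + sdeg H v ≤ β)
    (hP2 : ∀ u v : V, G.Adj u v → ¬ H.Adj u v →
      (β : ℝ) * (1 - lam) ≤ (sdeg H u + sdeg H v : ℝ))
    (a b : V) (hab : a ≠ b) (hnadj : ¬ G.Adj a b)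
    (hbip' : (G ⊔ SimpleGraph.fromEdgeSet {s(a, b)}).Colorable 2) :
    ∃ H' : SimpleGraph V, H' ≤ G ⊔ SimpleGraph.fromEdgeSet {s(a, b)} ∧
      (∀ u v : V, H'.Adj u v → sdeg H' u + sdeg H' v ≤ β) ∧
      (∀ u v : V, (G ⊔ SimpleGraph.fromEdgeSet {s(a, b)}).Adj u v → ¬ H'.Adj u v →
        (β : ℝ) * (1 - lam) ≤ (sdeg H' u + sdeg H' v : ℝ)) ∧
      ((symmDiff H.edgeSet H'.edgeSet).ncard : ℝ) ≤ 24 / lam + 2 := by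
  have hβ : 1 ≤ β * lam := by linarith [(mod_cast hℓpos : (1 : ℝ) ≤ ℓ)]
  have hbound : 8 / lam + 3 ≤ 24 / lam + 2 := by
    have := one_lt_one_div hlam0 hlam1
    ring_nf at this ⊢
    linarith
  obtain ⟨H', hle, -, hP1', hP2', -, hcard⟩ :=
    stmt15_general G H (fun v => Set.toFinite _) hHG β lam hβ hP1 hP2 a b hab hnadj
  exact ⟨H', hle, hP1', hP2', hcard.trans hbound⟩
end
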